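/- (Syndrome identity used in the soundness proof of Theorem 1.) Let F be a field, k a positive integer, n = 2k, G a k×n matrix over F whose left and right k×k blocks are circulant, and H an (n−k)×n matrix over F satisfying H·(x·G)^T = 0 for all x ∈ F^k (H is a parity-check matrix of the double circulant code generated by G). Let x ∈ F^k, e ∈ F^n, and y = x·G + e. Then for every a = (α_1,…,α_k) ∈ F^k, H·Γ_a(y)^T = H·Γ_a(e)^T. -/

import Mathlib

/-- Left rotation of the vector `x ∈ F^k` by `i` positions:
`rot i (x_1, …, x_k) = (x_{i+1}, …, x_k, x_1, …, x_i)` (indices mod `k`). -/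
def rot {F : Type*} {k : ℕ} (i : ℕ) (x : Fin k → F) : Fin k → F :=
  fun j => x ⟨(j.val + i) % k, Nat.mod_lt _ j.pos⟩

/-- Simultaneous (parallel) left rotation by `i` positions of the two halves of a
vector `y ∈ F^{2k}`: `drot i (y⁽¹⁾, y⁽²⁾) = (rot i y⁽¹⁾, rot i y⁽²⁾)`. -/
def drot {F : Type*} {k : ℕ} (i : ℕ) (y : Fin (2 * k) → F) : Fin (2 * k) → F :=
  fun j =>
    if h : j.val < k then
      y ⟨(j.val + i) % k,
        lt_of_lt_of_le (Nat.mod_lt _ (lt_of_le_of_lt (Nat.zero_le _) h)) (by omega)⟩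
    else
      y ⟨k + (j.val - k + i) % k, by
        have h2 := j.isLt
        have hk : 0 < k := by omega
        have := Nat.mod_lt (j.val - k + i) hk
        omega⟩

/-- `Γ_a(y) = Σ_{i=1}^{k} α_i · drot_i(y)` (with `i : Fin k` 0-indexed, so the
rotation amount is `i.val + 1`). -/
def Gamma {F : Type*} [Field F] {k : ℕ} (a : Fin k → F) (y : Fin (2 * k) → F) :
    Fin (2 * k) → F :=
  ∑ i : Fin k, a i • drot (i.val + 1) y

/-- `Γ'_a(x) = Σ_{i=1}^{k} α_i · rot_{k−i}(x)` (with `i : Fin k` 0-indexed, so the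
rotation amount is `k - (i.val + 1)`). -/
def Gamma' {F : Type*} [Field F] {k : ℕ} (a : Fin k → F) (x : Fin k → F) :
    Fin k → F :=
  ∑ i : Fin k, a i • rot (k - (i.val + 1)) x

/-- A `k × k` matrix is circulant if its entry `(i, j)` depends only on `(j - i) mod k`. -/
def IsCirculant {F : Type*} {k : ℕ} (A : Matrix (Fin k) (Fin k) F) : Prop :=
  ∃ c : Fin k → F, ∀ i j, A i j = c (j - i)

/-- Embedding of `Fin k` as the first block of `Fin (2 * k)`. -/
def finL {k : ℕ} (j : Fin k) : Fin (2 * k) := ⟨j.val, by have := j.isLt; omega⟩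

/-- Embedding of `Fin k` as the second block of `Fin (2 * k)`. -/
def finR {k : ℕ} (j : Fin k) : Fin (2 * k) := ⟨k + j.val, by have := j.isLt; omega⟩

/-!
A circulant matrix commutes with cyclic rotation, so rotating both blocks of a codeword `x·G` is the
same as encoding the rotated message. Hence `Γ_a` maps the code generated by `G` into itself: by
linearity it turns `x·G + e` into a codeword plus `Γ_a(e)`, and `H` kills the codeword.
-/

open Matrix

section Rotation

variable {F : Type*} {k : ℕ}

theorem rot_apply [NeZero k] (i : ℕ) (x : Fin k → F) (j : Fin k) :
    rot i x j = x (j + Fin.ofNat k i) :=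
  congrArg x (Fin.ext (by simp [Fin.val_add]))

theorem IsCirculant.rot_vecMul [NonUnitalNonAssocSemiring F] {A : Matrix (Fin k) (Fin k) F}
    (hA : IsCirculant A) (i : ℕ) (x : Fin k → F) :
    rot i (x ᵥ* A) = rot i x ᵥ* A := by
  obtain ⟨c, hc⟩ := hA
  funext j
  have : NeZero k := ⟨j.pos.ne'⟩
  let s := Fin.ofNat k i
  calc rot i (x ᵥ* A) j
      = ∑ l, x l * c (j + s - l) := by
        simp only [rot_apply, vecMul, dotProduct, hc, s]
    _ = ∑ l, x (l + s) * c (j + s - (l + s)) :=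
        (Equiv.sum_comp (Equiv.addRight s) fun l => x l * c (j + s - l)).symm
    _ = (rot i x ᵥ* A) j := by
        simp only [add_sub_add_right_eq_sub, rot_apply, vecMul, dotProduct, hc, s]

end Rotation

section Blocks

variable {F : Type*} {k : ℕ}

theorem eq_of_comp_finL_of_comp_finR {u v : Fin (2 * k) → F}
    (hL : u ∘ finL = v ∘ finL) (hR : u ∘ finR = v ∘ finR) : u = v := by
  funext j
  by_cases hj : j.val < k
  · exact congrFun hL ⟨j, hj⟩
  · have hj_eq : finR ⟨j - k, by omega⟩ = j := Fin.ext (Nat.add_sub_cancel' (not_lt.mp hj))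
    exact hj_eq ▸ congrFun hR ⟨j - k, by omega⟩

theorem drot_comp_finL (i : ℕ) (y : Fin (2 * k) → F) :
    drot i y ∘ finL = rot i (y ∘ finL) :=
  funext fun j => dif_pos j.isLt

theorem drot_comp_finR (i : ℕ) (y : Fin (2 * k) → F) :
    drot i y ∘ finR = rot i (y ∘ finR) := by
  funext j
  simp [drot, rot, finR]

theorem drot_add [Add F] (i : ℕ) (u v : Fin (2 * k) → F) :
    drot i (u + v) = drot i u + drot i v := by
  funext j
  simp only [drot, Pi.add_apply]
  split <;> rfl

theorem drot_vecMul [NonUnitalNonAssocSemiring F] {G : Matrix (Fin k) (Fin (2 * k)) F}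
    (hL : IsCirculant (of fun i j => G i (finL j)))
    (hR : IsCirculant (of fun i j => G i (finR j))) (i : ℕ) (x : Fin k → F) :
    drot i (x ᵥ* G) = rot i x ᵥ* G :=
  eq_of_comp_finL_of_comp_finR
    ((drot_comp_finL i _).trans (hL.rot_vecMul i x))
    ((drot_comp_finR i _).trans (hR.rot_vecMul i x))

end Blocks

section Gamma

variable {F : Type*} [Field F] {k : ℕ}

theorem Gamma_add (a : Fin k → F) (u v : Fin (2 * k) → F) :
    Gamma a (u + v) = Gamma a u + Gamma a v := by
  simp only [Gamma, drot_add, smul_add, Finset.sum_add_distrib]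

theorem Gamma_vecMul {G : Matrix (Fin k) (Fin (2 * k)) F}
    (hL : IsCirculant (of fun i j => G i (finL j)))
    (hR : IsCirculant (of fun i j => G i (finR j))) (a x : Fin k → F) :
    Gamma a (x ᵥ* G) = (∑ i, a i • rot (i.val + 1) x) ᵥ* G := by
  simp only [Gamma, drot_vecMul hL hR, sum_vecMul, smul_vecMul]

theorem syndrome_Gamma_general {m : Type*} {G : Matrix (Fin k) (Fin (2 * k)) F}
    (hL : IsCirculant (of fun i j => G i (finL j)))
    (hR : IsCirculant (of fun i j => G i (finR j)))
    {H : Matrix m (Fin (2 * k)) F} (hH : ∀ x : Fin k → F, H *ᵥ (x ᵥ* G) = 0)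
    (x : Fin k → F) (e : Fin (2 * k) → F) (a : Fin k → F) :
    H *ᵥ Gamma a (x ᵥ* G + e) = H *ᵥ Gamma a e := by
  rw [Gamma_add, Gamma_vecMul hL hR, mulVec_add, hH, zero_add]

end Gamma

/-- Syndrome identity used in the soundness proof: if `G` is a `k × 2k` matrix
with circulant blocks, `H` an `(n−k) × n` (`n = 2k`) parity-check matrix of the
code generated by `G` (i.e. `H·(x·G)ᵀ = 0` for all `x`), and `y = x·G + e`,
then `H·Γ_a(y)ᵀ = H·Γ_a(e)ᵀ` for every `a ∈ F^k`. -/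
theorem syndrome_Gamma {F : Type*} [Field F] {k : ℕ} (hk : 0 < k)
    (G : Matrix (Fin k) (Fin (2 * k)) F)
    (hL : IsCirculant (Matrix.of fun i j => G i (finL j)))
    (hR : IsCirculant (Matrix.of fun i j => G i (finR j)))
    (H : Matrix (Fin (2 * k - k)) (Fin (2 * k)) F)
    (hH : ∀ x : Fin k → F, H.mulVec (Matrix.vecMul x G) = 0)
    (x : Fin k → F) (e : Fin (2 * k) → F)
    (y : Fin (2 * k) → F) (hy : y = Matrix.vecMul x G + e)
    (a : Fin k → F) :
    H.mulVec (Gamma a y) = H.mulVec (Gamma a e) := by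
  subst hy
  exact syndrome_Gamma_general hL hR hH x e a
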